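/- Let μ be a probability measure on ℝ with μ((−∞,0]) = 0 such that ∫₀^∞ x dμ(x) < ∞, and let k_μ be its Polya kernel. Then ∫_ℝ k_μ(r) dr = ∫₀^∞ x dμ(x); that is, the area under the Polya kernel equals the mean of the distribution μ. -/

import Mathlib

open MeasureTheory

/-!
The tent `r ↦ max 0 (1 - |r| / x)` is the unit tent, of area `1`, stretched horizontally by the
factor `x`, so its area is `x`. The Polya kernel is the mixture over `μ` of these tents, and by
Fubini its area is the `μ`-average of theirs.
-/

open Module Set

section ScaleMixture

theorem sigmaFinite_of_integrable_of_ae_ne_zero {α E : Type*} [MeasurableSpace α]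
    [NormedAddCommGroup E] {ν : Measure α} {f : α → E} (hf : Integrable f ν)
    (hf0 : ∀ᵐ x ∂ν, f x ≠ 0) : SigmaFinite ν := by
  obtain ⟨t, ht, hft, hν⟩ := hf.aefinStronglyMeasurable.exists_set_sigmaFinite
  have ht_ae : ∀ᵐ x ∂ν, x ∈ t := by
    filter_upwards [(ae_restrict_iff' ht.compl).1 hft, hf0] with x hx hx0
    exact of_not_not fun hxt => hx0 (hx hxt)
  rwa [Measure.restrict_eq_self_of_ae_mem ht_ae] at hν

variable {V E : Type*} [NormedAddCommGroup V] [NormedSpace ℝ V] [FiniteDimensional ℝ V]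
  [MeasurableSpace V] [BorelSpace V] (m : Measure V) [m.IsAddHaarMeasure]
  [NormedAddCommGroup E] {φ : V → E} {ν : Measure ℝ}

theorem quasiMeasurePreserving_inv_smul_prod [SFinite ν] (hν0 : ∀ᵐ x ∂ν, x ≠ 0) :
    Measure.QuasiMeasurePreserving (fun p : V × ℝ => p.2⁻¹ • p.1) (m.prod ν) m := by
  refine QuasiMeasurePreserving.prod_of_left (by fun_prop) ?_
  filter_upwards [hν0] with x hx
  exact Measure.quasiMeasurePreserving_smul m (inv_ne_zero hx)

theorem integrable_comp_inv_smul_prod [SFinite ν] (hφ : Integrable φ m) (hν0 : ∀ᵐ x ∂ν, x ≠ 0)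
    (hν : Integrable (fun x => |x ^ finrank ℝ V|) ν) :
    Integrable (fun p : V × ℝ => φ (p.2⁻¹ • p.1)) (m.prod ν) := by
  have hmeas : AEStronglyMeasurable (fun p : V × ℝ => φ (p.2⁻¹ • p.1)) (m.prod ν) :=
    hφ.aestronglyMeasurable.comp_quasiMeasurePreserving (quasiMeasurePreserving_inv_smul_prod m hν0)
  refine (integrable_prod_iff' hmeas).2 ⟨?_, ?_⟩
  · filter_upwards [hν0] with x hx
    exact hφ.comp_smul (inv_ne_zero hx)
  · have hnorm (x : ℝ) : ∫ v, ‖φ (x⁻¹ • v)‖ ∂m = |x ^ finrank ℝ V| * ∫ v, ‖φ v‖ ∂m :=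
      Measure.integral_comp_inv_smul m (fun v => ‖φ v‖) x
    simpa only [hnorm] using hν.mul_const _

theorem integral_integral_comp_inv_smul [NormedSpace ℝ E] [CompleteSpace E]
    (hφ : Integrable φ m) (hν0 : ∀ᵐ x ∂ν, x ≠ 0) (hν : Integrable (fun x => |x ^ finrank ℝ V|) ν) :
    ∫ v, ∫ x, φ (x⁻¹ • v) ∂ν ∂m = (∫ x, |x ^ finrank ℝ V| ∂ν) • ∫ v, φ v ∂m := by
  have : SigmaFinite ν := sigmaFinite_of_integrable_of_ae_ne_zero hν <|
    hν0.mono fun x hx => abs_ne_zero.2 (pow_ne_zero _ hx)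
  calc ∫ v, ∫ x, φ (x⁻¹ • v) ∂ν ∂m
      = ∫ x, ∫ v, φ (x⁻¹ • v) ∂m ∂ν :=
        integral_integral_swap (integrable_comp_inv_smul_prod m hφ hν0 hν)
    _ = ∫ x, |x ^ finrank ℝ V| • ∫ v, φ v ∂m ∂ν := by
        simp only [Measure.integral_comp_inv_smul]
    _ = (∫ x, |x ^ finrank ℝ V| ∂ν) • ∫ v, φ v ∂m := integral_smul_const _ _

end ScaleMixture

/-- The unit tent (triangle function) on `[-1, 1]`, whose dilates are mixed by Polya kernels. -/
def tent (t : ℝ) : ℝ := max 0 (1 - |t|)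

theorem tent_inv_smul {x : ℝ} (hx : 0 < x) (r : ℝ) : tent (x⁻¹ • r) = max 0 (1 - |r| / x) := by
  rw [tent, smul_eq_mul, abs_mul, abs_inv, abs_of_pos hx, inv_mul_eq_div]

theorem integrable_tent : Integrable tent := by
  have hcont : Continuous tent := by unfold tent; fun_prop
  refine hcont.integrable_of_hasCompactSupport <|
    .intro (isCompact_Icc (a := (-1 : ℝ)) (b := 1)) fun t ht => ?_
  have ht : 1 < |t| := not_le.1 (mt abs_le.1 ht)
  exact max_eq_left (by linarith)

theorem integral_tent : ∫ t, tent t = 1 := by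
  have hhalf : ∫ t in Ioi (0 : ℝ), max 0 (1 - t) = 1 / 2 :=
    calc ∫ t in Ioi (0 : ℝ), max 0 (1 - t)
        = ∫ t in Ioc (0 : ℝ) 1, max 0 (1 - t) := by
          refine setIntegral_eq_of_subset_of_forall_sdiff_eq_zero measurableSet_Ioi
            Ioc_subset_Ioi_self fun t ht => max_eq_left ?_
          have : 1 < t := not_le.1 fun h => ht.2 ⟨ht.1, h⟩
          linarith
      _ = ∫ t in Ioc (0 : ℝ) 1, (1 - t) :=
          setIntegral_congr_fun measurableSet_Ioc fun t ht => max_eq_right (sub_nonneg.2 ht.2)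
      _ = ∫ t in (0 : ℝ)..1, (1 - t) := (intervalIntegral.integral_of_le zero_le_one).symm
      _ = 1 / 2 := by
          rw [intervalIntegral.integral_sub (by simp) (by simp), intervalIntegral.integral_const,
            integral_id]
          norm_num
  calc ∫ t, tent t = 2 * ∫ t in Ioi (0 : ℝ), max 0 (1 - t) :=
        integral_comp_abs (f := fun t => max 0 (1 - t))
    _ = 1 := by rw [hhalf]; norm_num

/-- The Polya kernel `k_μ`. For a measure `μ` of infinite mass its value at `r = 0` may be the
junk value of a divergent integral. -/
noncomputable def polyaKernel (μ : Measure ℝ) (r : ℝ) : ℝ :=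
  ∫ x in Ioi (0 : ℝ), max 0 (1 - |r| / x) ∂μ

theorem polyaKernel_eq_integral_tent (μ : Measure ℝ) (r : ℝ) :
    polyaKernel μ r = ∫ x in Ioi (0 : ℝ), tent (x⁻¹ • r) ∂μ :=
  setIntegral_congr_fun measurableSet_Ioi fun _ hx => (tent_inv_smul hx r).symm

theorem polya_kernel_area_under_curve_general {μ : Measure ℝ}
    (hmean : IntegrableOn (fun x : ℝ => x) (Ioi 0) μ) :
    ∫ r, polyaKernel μ r = ∫ x in Ioi (0 : ℝ), x ∂μ := by
  have hpos : ∀ᵐ x ∂μ.restrict (Ioi 0), 0 < x := ae_restrict_mem measurableSet_Ioi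
  have habs : Integrable (fun x => |x ^ finrank ℝ ℝ|) (μ.restrict (Ioi 0)) := by
    simpa only [finrank_self, pow_one] using hmean.abs
  calc ∫ r, polyaKernel μ r
      = ∫ r, ∫ x in Ioi (0 : ℝ), tent (x⁻¹ • r) ∂μ := by simp only [polyaKernel_eq_integral_tent]
    _ = (∫ x in Ioi (0 : ℝ), |x ^ finrank ℝ ℝ| ∂μ) • ∫ t, tent t :=
        integral_integral_comp_inv_smul volume integrable_tent (hpos.mono fun _ hx => hx.ne') habs
    _ = ∫ x in Ioi (0 : ℝ), |x| ∂μ := by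
        simp only [finrank_self, pow_one, integral_tent, smul_eq_mul, mul_one]
    _ = ∫ x in Ioi (0 : ℝ), x ∂μ := integral_congr_ae (hpos.mono fun _ hx => abs_of_pos hx)

/-- Theorem 2.4: the area under the Polya kernel equals the mean of the distribution:
if `μ` has positive support and finite mean, then `∫_ℝ k_μ(r) dr = ∫₀^∞ x dμ(x)`. -/
theorem polya_kernel_area_under_curve (μ : Measure ℝ) [IsProbabilityMeasure μ]
    (hμ : μ (Set.Iic 0) = 0)
    (hmean : Integrable (fun x : ℝ => x) μ)
    (k : ℝ → ℝ)
    (hk : ∀ r : ℝ, k r = ∫ x in Set.Ioi (0 : ℝ), max 0 (1 - |r| / x) ∂μ) :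
    ∫ r : ℝ, k r = ∫ x in Set.Ioi (0 : ℝ), x ∂μ := by
  obtain rfl : k = polyaKernel μ := funext hk
  exact polya_kernel_area_under_curve_general hmean.integrableOn
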